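/- arXiv:math/0310308 — 5 statements merged into one kernel-verified Lean document; each statement's English description precedes it below -/
import Mathlib

section
/- For α > 0 and u ∈ ℝ, the curve γ(θ) = (cos θ, sin θ, u e^{−αθ}) lies in M = ℝ³ ∖ {(0,0,z) : z ∈ ℝ} and satisfies the lifted ODE γ'(θ) = −sin θ · ζ_X^α(γ(θ)) + cos θ · ζ_Y^α(γ(θ)) for all θ ∈ ℝ. -/
noncomputable section

/-!
STATEMENT 10: for `α > 0` and `u ∈ ℝ`, the curve `γ(θ) = (cos θ, sin θ, u e^{−αθ})` lies in
`M = ℝ³ ∖ {z-axis}` and satisfies `γ'(θ) = −sin θ · ζ_X^α(γ(θ)) + cos θ · ζ_Y^α(γ(θ))`.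
-/

/-- `ℝ³` minus the `z`-axis. -/
def exSixM : Set (ℝ × ℝ × ℝ) := {p | (p.1, p.2.1) ≠ (0, 0)}

/-- The vector field `ζ_X^α(x,y,z) = (1, 0, α y z/(x²+y²))`. -/
def zetaX (α : ℝ) : ℝ × ℝ × ℝ → ℝ × ℝ × ℝ :=
  fun p => (1, 0, α * p.2.1 * p.2.2 / (p.1 ^ 2 + p.2.1 ^ 2))

/-- The vector field `ζ_Y^α(x,y,z) = (0, 1, −α x z/(x²+y²))`. -/
def zetaY (α : ℝ) : ℝ × ℝ × ℝ → ℝ × ℝ × ℝ :=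
  fun p => (0, 1, -(α * p.1 * p.2.2 / (p.1 ^ 2 + p.2.1 ^ 2)))

theorem helicoidal_curve_is_lift (α : ℝ) (hα : 0 < α) (u : ℝ)
    (γ : ℝ → ℝ × ℝ × ℝ)
    (hγ : γ = fun θ => (Real.cos θ, Real.sin θ, u * Real.exp (-α * θ))) :
    ∀ θ : ℝ, γ θ ∈ exSixM ∧
      HasDerivAt γ
        ((-Real.sin θ) • zetaX α (γ θ) + (Real.cos θ) • zetaY α (γ θ)) θ := by
  subst hγ
  intro θ
  have h1 : Real.cos θ ^ 2 + Real.sin θ ^ 2 = 1 := Real.cos_sq_add_sin_sq θ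
  constructor
  · intro h
    simp only [Prod.mk.injEq] at h
    rw [h.1, h.2] at h1
    norm_num at h1
  · have h3 : HasDerivAt (fun t : ℝ => u * Real.exp (-α * t))
        (u * (Real.exp (-α * θ) * (-α * 1))) θ :=
      (((hasDerivAt_id θ).const_mul (-α)).exp).const_mul u
    have h := (Real.hasDerivAt_cos θ).prodMk ((Real.hasDerivAt_sin θ).prodMk h3)
    refine h.congr_deriv ?_
    simp only [zetaX, zetaY, h1, Prod.smul_mk, Prod.mk_add_mk, smul_eq_mul, Prod.mk.injEq]
    refine ⟨by ring, by ring, ?_⟩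
    linear_combination (α * u * Real.exp (-α * θ)) * h1
end
end

section
/- Orbit closures in Example 6: fix α > 0 and C ≠ 0, and let S_C = {(r cos θ, r sin θ, C e^{−αθ}) : r > 0, θ ∈ ℝ} ⊆ ℝ³. Then the closure of S_C inside M = ℝ³ ∖ {(0,0,z) : z ∈ ℝ} equals S_C ∪ {(x, y, 0) : (x,y) ≠ (0,0)}; in particular S_C is not closed in M. -/
noncomputable section

/-- The helicoidal orbit `S_C`. -/
def helicoid (α C : ℝ) : Set (ℝ × ℝ × ℝ) :=
  {p | ∃ r > (0 : ℝ), ∃ θ : ℝ, p = (r * Real.cos θ, r * Real.sin θ, C * Real.exp (-α * θ))}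

theorem helicoid_aux_closure (α : ℝ) (hα : 0 < α) (C : ℝ) (hC : C ≠ 0) (x y z : ℝ)
    (hp : (x, y, z) ∈ closure (helicoid α C)) (hxy : (x, y) ≠ (0, 0)) (hz : z ≠ 0) :
    (x, y, z) ∈ helicoid α C := by
  have hzC : 0 ≤ z / C := by
    have h : (fun p : ℝ × ℝ × ℝ => p.2.2 / C) (x, y, z) ∈ closure (Set.Ici (0 : ℝ)) := by
      refine ContinuousWithinAt.mem_closure (s := helicoid α C) (f := (fun p : ℝ × ℝ × ℝ => p.2.2 / C)) ?_ hp ?_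
      · exact Continuous.continuousWithinAt (by fun_prop)
      · rintro _ ⟨r, hr, θ, rfl⟩
        have : C * Real.exp (-α * θ) / C = Real.exp (-α * θ) := by field_simp
        simp only [Set.mem_Ici, this]
        positivity
    rwa [isClosed_Ici.closure_eq] at h
  have hzC' : 0 < z / C := lt_of_le_of_ne hzC (div_ne_zero hz hC).symm
  have key : ∀ r θ : ℝ, 0 < r →
      Real.sqrt ((r * Real.cos θ) ^ 2 + (r * Real.sin θ) ^ 2) = r ∧
      -Real.log (C * Real.exp (-α * θ) / C) / α = θ := by
    intro r θ hr
    constructor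
    · have : (r * Real.cos θ) ^ 2 + (r * Real.sin θ) ^ 2 = r ^ 2 := by
        linear_combination r ^ 2 * Real.sin_sq_add_cos_sq θ
      rw [this, Real.sqrt_sq hr.le]
    · have : C * Real.exp (-α * θ) / C = Real.exp (-α * θ) := by field_simp
      rw [this, Real.log_exp]
      field_simp
  have hlog : ContinuousAt (fun p : ℝ × ℝ × ℝ => -Real.log (p.2.2 / C) / α) (x, y, z) := by
    have h1 : ContinuousAt (fun p : ℝ × ℝ × ℝ => p.2.2 / C) (x, y, z) :=
      Continuous.continuousAt (by fun_prop)
    exact ((h1.log (div_ne_zero hz hC)).neg).div_const α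
  have hs : ContinuousAt (fun p : ℝ × ℝ × ℝ => Real.sqrt (p.1 ^ 2 + p.2.1 ^ 2)) (x, y, z) :=
    Continuous.continuousAt (by fun_prop)
  have h1 : (fun p : ℝ × ℝ × ℝ => p.1 - Real.sqrt (p.1 ^ 2 + p.2.1 ^ 2) *
      Real.cos (-Real.log (p.2.2 / C) / α)) (x, y, z) ∈ closure ({0} : Set ℝ) := by
    refine ContinuousWithinAt.mem_closure (s := helicoid α C) (f := (fun p : ℝ × ℝ × ℝ => p.1 - Real.sqrt (p.1 ^ 2 + p.2.1 ^ 2) *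
      Real.cos (-Real.log (p.2.2 / C) / α))) ?_ hp ?_
    · exact (continuousAt_fst.sub
        (hs.mul (Real.continuous_cos.continuousAt.comp hlog))).continuousWithinAt
    · rintro _ ⟨r, hr, θ, rfl⟩
      obtain ⟨ha, hb⟩ := key r θ hr
      simp only [Set.mem_singleton_iff, ha, hb, sub_self]
  have h2 : (fun p : ℝ × ℝ × ℝ => p.2.1 - Real.sqrt (p.1 ^ 2 + p.2.1 ^ 2) *
      Real.sin (-Real.log (p.2.2 / C) / α)) (x, y, z) ∈ closure ({0} : Set ℝ) := by
    refine ContinuousWithinAt.mem_closure (s := helicoid α C) (f := (fun p : ℝ × ℝ × ℝ => p.2.1 - Real.sqrt (p.1 ^ 2 + p.2.1 ^ 2) *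
      Real.sin (-Real.log (p.2.2 / C) / α))) ?_ hp ?_
    · have h3 : ContinuousAt (fun p : ℝ × ℝ × ℝ => p.2.1) (x, y, z) :=
        Continuous.continuousAt (by fun_prop)
      exact (h3.sub
        (hs.mul (Real.continuous_sin.continuousAt.comp hlog))).continuousWithinAt
    · rintro _ ⟨r, hr, θ, rfl⟩
      obtain ⟨ha, hb⟩ := key r θ hr
      simp only [Set.mem_singleton_iff, ha, hb, sub_self]
  simp only [closure_singleton, Set.mem_singleton_iff] at h1 h2
  refine ⟨Real.sqrt (x ^ 2 + y ^ 2), ?_, -Real.log (z / C) / α, ?_⟩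
  · apply Real.sqrt_pos.2
    by_contra hn
    apply hxy
    have hx : x = 0 := by nlinarith [sq_nonneg x, sq_nonneg y]
    have hy : y = 0 := by nlinarith [sq_nonneg x, sq_nonneg y]
    rw [hx, hy]
  · have h3 : -α * (-Real.log (z / C) / α) = Real.log (z / C) := by field_simp
    rw [h3, Real.exp_log hzC', ← sub_eq_zero.1 h1, ← sub_eq_zero.1 h2, mul_div_cancel₀ z hC]

theorem helicoid_aux_plane (α : ℝ) (hα : 0 < α) (C : ℝ) (x y : ℝ)
    (hxy : (x, y) ≠ (0, 0)) : (x, y, (0 : ℝ)) ∈ closure (helicoid α C) := by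
  set w : ℂ := ⟨x, y⟩ with hw
  have hw0 : w ≠ 0 := by
    intro h
    apply hxy
    have hx := congrArg Complex.re h
    have hy := congrArg Complex.im h
    simp only [hw, Complex.zero_re, Complex.zero_im] at hx hy
    rw [hx, hy]
  have hx : ‖w‖ * Real.cos w.arg = x := Complex.norm_mul_cos_arg w
  have hy : ‖w‖ * Real.sin w.arg = y := Complex.norm_mul_sin_arg w
  have hlim : Filter.Tendsto
      (fun n : ℕ => (x, y, C * Real.exp (-α * (w.arg + n * (2 * Real.pi)))))
      Filter.atTop (nhds (x, y, (0 : ℝ))) := by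
    refine tendsto_const_nhds.prodMk_nhds (tendsto_const_nhds.prodMk_nhds ?_)
    have h1 : Filter.Tendsto (fun n : ℕ => w.arg + n * (2 * Real.pi))
        Filter.atTop Filter.atTop :=
      Filter.tendsto_atTop_add_const_left _ _
        (tendsto_natCast_atTop_atTop.atTop_mul_const Real.two_pi_pos)
    have h2 := Real.tendsto_exp_atBot.comp (h1.const_mul_atTop_of_neg (neg_lt_zero.2 hα))
    simpa using h2.const_mul C
  refine mem_closure_of_tendsto hlim (Filter.Eventually.of_forall fun n => ?_)
  refine ⟨‖w‖, norm_pos_iff.2 hw0, w.arg + n * (2 * Real.pi), ?_⟩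
  rw [Real.cos_add_nat_mul_two_pi, Real.sin_add_nat_mul_two_pi, hx, hy]

theorem helicoid_closure_in_M (α : ℝ) (hα : 0 < α) (C : ℝ) (hC : C ≠ 0) :
    closure (helicoid α C) ∩ exSixM
        = helicoid α C ∪ {p : ℝ × ℝ × ℝ | (p.1, p.2.1) ≠ (0, 0) ∧ p.2.2 = 0} ∧
      closure (helicoid α C) ∩ exSixM ≠ helicoid α C := by
  have hmain : closure (helicoid α C) ∩ exSixM
        = helicoid α C ∪ {p : ℝ × ℝ × ℝ | (p.1, p.2.1) ≠ (0, 0) ∧ p.2.2 = 0} := by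
    ext ⟨x, y, z⟩
    constructor
    · rintro ⟨hp, hM⟩
      by_cases hz : z = 0
      · exact Or.inr ⟨hM, hz⟩
      · exact Or.inl (helicoid_aux_closure α hα C hC x y z hp hM hz)
    · rintro (hp | ⟨hM, hz⟩)
      · refine ⟨subset_closure hp, ?_⟩
        obtain ⟨r, hr, θ, h⟩ := hp
        simp only [Prod.mk.injEq] at h
        obtain ⟨hx, hy, -⟩ := h
        intro h0
        simp only [Prod.mk.injEq] at h0
        obtain ⟨h1, h2⟩ := h0
        rw [hx] at h1
        rw [hy] at h2
        have hc := (mul_eq_zero.1 h1).resolve_left hr.ne'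
        have hs := (mul_eq_zero.1 h2).resolve_left hr.ne'
        have := Real.sin_sq_add_cos_sq θ
        rw [hc, hs] at this
        norm_num at this
      · simp only at hz
        subst hz
        exact ⟨helicoid_aux_plane α hα C x y hM, hM⟩
  refine ⟨hmain, ?_⟩
  intro h
  have h1 : ((1 : ℝ), (0 : ℝ), (0 : ℝ)) ∈ helicoid α C := by
    rw [← h, hmain]
    right
    simp
  obtain ⟨r, hr, θ, h2⟩ := h1
  simp only [Prod.mk.injEq] at h2
  exact mul_ne_zero hC (Real.exp_pos _).ne' h2.2.2.symm
end
end

section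
/- Distinctness of helicoidal orbits: fix α > 0 and let S_C = {(r cos θ, r sin θ, C e^{−αθ}) : r > 0, θ ∈ ℝ} ⊆ ℝ³ for C ≠ 0. For nonzero reals C and C', the sets S_C and S_{C'} are equal if and only if C' = C · e^{2πα n} for some integer n; otherwise they are disjoint. -/
noncomputable section

/-!
STATEMENT 13: distinctness of helicoidal orbits.  For `α > 0` and nonzero `C, C'`,
`S_C = S_{C'}` iff `C' = C e^{2παn}` for some `n : ℤ`; otherwise they are disjoint.
-/

open Real

theorem helicoid_common (α C C' : ℝ) (p : ℝ × ℝ × ℝ) (h : p ∈ helicoid α C)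
    (h' : p ∈ helicoid α C') : ∃ n : ℤ, C' = C * Real.exp (2 * π * α * n) := by
  obtain ⟨r, hr, θ, rfl⟩ := h
  obtain ⟨s, hs, φ, h⟩ := h'
  simp only [Prod.mk.injEq] at h
  obtain ⟨h1, h2, h3⟩ := h
  have hrs : r ^ 2 = s ^ 2 := by
    calc r ^ 2 = (r * Real.cos θ) ^ 2 + (r * Real.sin θ) ^ 2 := by
          linear_combination (-r ^ 2) * Real.sin_sq_add_cos_sq θ
      _ = s ^ 2 := by
          rw [h1, h2]
          linear_combination (s ^ 2) * Real.sin_sq_add_cos_sq φ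
  have hrs' : r = s := (pow_left_inj₀ hr.le hs.le two_ne_zero).1 hrs
  subst hrs'
  have hc := mul_left_cancel₀ hr.ne' h1
  have hsn := mul_left_cancel₀ hr.ne' h2
  obtain ⟨k, hk⟩ := Real.Angle.angle_eq_iff_two_pi_dvd_sub.1 (Real.Angle.cos_sin_inj hc hsn)
  refine ⟨-k, ?_⟩
  have e : Real.exp (-α * θ) = Real.exp (2 * π * α * ((-k : ℤ) : ℝ)) * Real.exp (-α * φ) := by
    rw [← Real.exp_add]
    congr 1
    push_cast
    linear_combination (-α) * hk
  rw [e, ← mul_assoc] at h3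
  exact (mul_right_cancel₀ (Real.exp_pos _).ne' h3).symm

theorem helicoid_subset (α C : ℝ) (n : ℤ) :
    helicoid α (C * Real.exp (2 * π * α * n)) ⊆ helicoid α C := by
  rintro p ⟨r, hr, θ, rfl⟩
  refine ⟨r, hr, θ - n * (2 * π), ?_⟩
  rw [Real.cos_sub_int_mul_two_pi, Real.sin_sub_int_mul_two_pi, mul_assoc, ← Real.exp_add]
  congr 4
  ring

theorem helicoid_eq_iff (α : ℝ) (hα : 0 < α) (C C' : ℝ) (hC : C ≠ 0) (hC' : C' ≠ 0) :
    (helicoid α C = helicoid α C' ↔ ∃ n : ℤ, C' = C * Real.exp (2 * π * α * n)) ∧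
      ((¬ ∃ n : ℤ, C' = C * Real.exp (2 * π * α * n)) →
        Disjoint (helicoid α C) (helicoid α C')) := by
  refine ⟨⟨fun h => ?_, ?_⟩, fun h => ?_⟩
  · have hp : ((1 * Real.cos 0, 1 * Real.sin 0, C * Real.exp (-α * 0)) : ℝ × ℝ × ℝ) ∈
        helicoid α C := ⟨1, one_pos, 0, rfl⟩
    exact helicoid_common α C C' _ hp (h ▸ hp)
  · rintro ⟨n, rfl⟩
    refine Set.Subset.antisymm ?_ (helicoid_subset α C n)
    have := helicoid_subset α (C * Real.exp (2 * π * α * n)) (-n)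
    rw [mul_assoc, ← Real.exp_add] at this
    simpa using this
  · rw [Set.disjoint_left]
    exact fun p hp hp' => h (helicoid_common α C C' p hp hp')
end
end

section
/- Tangency of the generating vector fields to the orbits: fix α > 0, C ≠ 0, and let Φ(r, θ) = (r cos θ, r sin θ, C e^{−αθ}). Then for every (r, θ) ∈ (0,∞) × ℝ, both vectors ζ_X^α(Φ(r,θ)) and ζ_Y^α(Φ(r,θ)) lie in the image of the differential dΦ_{(r,θ)} : ℝ² → ℝ³. -/
noncomputable section

theorem generating_fields_tangent_to_helicoid (α : ℝ) (hα : 0 < α)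
    (C : ℝ) (hC : C ≠ 0) (Φ : ℝ × ℝ → ℝ × ℝ × ℝ)
    (hΦ : Φ = fun p => (p.1 * Real.cos p.2, p.1 * Real.sin p.2, C * Real.exp (-α * p.2))) :
    ∀ r θ : ℝ, 0 < r →
      zetaX α (Φ (r, θ)) ∈ Set.range (fderiv ℝ Φ (r, θ)) ∧
      zetaY α (Φ (r, θ)) ∈ Set.range (fderiv ℝ Φ (r, θ)) := by
  intro r θ hr
  have hr0 : r ≠ 0 := hr.ne'
  have h1 : HasFDerivAt (fun p : ℝ × ℝ => p.1) (ContinuousLinearMap.fst ℝ ℝ ℝ) (r, θ) :=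
    hasFDerivAt_fst
  have h2 : HasFDerivAt (fun p : ℝ × ℝ => p.2) (ContinuousLinearMap.snd ℝ ℝ ℝ) (r, θ) :=
    hasFDerivAt_snd
  have hd := (h1.mul h2.cos).prodMk
    ((h1.mul h2.sin).prodMk (((h2.const_mul (-α)).exp).const_mul C))
  have hf := hd.fderiv
  have he : fderiv ℝ Φ (r, θ) = _ := (congrArg (fun f => fderiv ℝ f (r, θ)) hΦ).trans hf
  rw [he]
  have hsq : (r * Real.cos θ) ^ 2 + (r * Real.sin θ) ^ 2 = r ^ 2 := by
    linear_combination r ^ 2 * Real.sin_sq_add_cos_sq θ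
  have hcs := Real.sin_sq_add_cos_sq θ
  constructor
  · refine ⟨(Real.cos θ, -Real.sin θ / r), ?_⟩
    simp only [hΦ, zetaX, hsq]
    refine Prod.ext ?_ (Prod.ext ?_ ?_)
    · simp
      field_simp
      linear_combination hcs
    · simp
      field_simp
      ring
    · simp
      field_simp
  · refine ⟨(Real.sin θ, Real.cos θ / r), ?_⟩
    simp only [hΦ, zetaY, hsq]
    refine Prod.ext ?_ (Prod.ext ?_ ?_)
    · simp
      field_simp
      ring
    · simp
      field_simp
      linear_combination hcs
    · simp
      field_simp
end
end

section
/- Incompleteness of the 𝔤-action in Example 6: for α > 0 the vector field ζ_X^α on M = ℝ³ ∖ {(0,0,z) : z ∈ ℝ} is not complete. Precisely, there is no differentiable curve γ : ℝ → ℝ³ with γ(t) ∈ M for all t, γ(0) = (−1, 0, 1), and γ'(t) = ζ_X^α(γ(t)) for all t ∈ ℝ; the maximal integral curve through (−1,0,1) is t ↦ (t−1, 0, 1), defined only for t < 1. -/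
noncomputable section

theorem zetaX_not_complete (α : ℝ) (hα : 0 < α) :
    (¬ ∃ γ : ℝ → ℝ × ℝ × ℝ, (∀ t : ℝ, γ t ∈ exSixM) ∧
        γ 0 = (-1, 0, 1) ∧ ∀ t : ℝ, HasDerivAt γ (zetaX α (γ t)) t) ∧
      (∀ t : ℝ, t < 1 →
        ((t - 1, 0, 1) : ℝ × ℝ × ℝ) ∈ exSixM ∧
        HasDerivAt (fun s : ℝ => ((s - 1, 0, 1) : ℝ × ℝ × ℝ))
          (zetaX α (t - 1, 0, 1)) t) ∧
      ((fun s : ℝ => ((s - 1, 0, 1) : ℝ × ℝ × ℝ)) 0 = (-1, 0, 1)) ∧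
      ((1 - 1, 0, 1) : ℝ × ℝ × ℝ) ∉ exSixM := by
  refine ⟨?_, ?_, ?_, ?_⟩
  · rintro ⟨γ, hM, h0, hd⟩
    have h1 : ∀ t, HasDerivAt (fun s => (γ s).1 - s) 0 t := by
      intro t
      have h := (hasFDerivAt_fst (𝕜 := ℝ) (p := γ t)).comp_hasDerivAt t (hd t)
      have h' := HasDerivAt.sub h (hasDerivAt_id t)
      have e : (ContinuousLinearMap.fst ℝ ℝ (ℝ × ℝ)) (zetaX α (γ t)) - 1 = 0 := by
        simp [zetaX]
      rw [e] at h'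
      exact h'
    have h2 : ∀ t, HasDerivAt (fun s => (γ s).2.1) 0 t := by
      intro t
      have h := (hasFDerivAt_snd (𝕜 := ℝ) (p := γ t)).comp_hasDerivAt t (hd t)
      have h' := (hasFDerivAt_fst (𝕜 := ℝ) (p := (γ t).2)).comp_hasDerivAt t h
      exact h'
    have c1 := is_const_of_deriv_eq_zero (fun t => (h1 t).differentiableAt)
      (fun t => (h1 t).deriv) 1 0
    have c2 := is_const_of_deriv_eq_zero (fun t => (h2 t).differentiableAt)
      (fun t => (h2 t).deriv) 1 0
    simp only [h0] at c1 c2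
    apply hM 1
    have c3 : (γ 1).1 = 0 := by linarith
    rw [c3, c2]
  · intro t ht
    refine ⟨?_, ?_⟩
    · intro h
      have h' : t - 1 = 0 := congrArg Prod.fst h
      linarith
    · have h := ((hasDerivAt_id t).sub_const 1).prodMk
        (hasDerivAt_const t ((0, 1) : ℝ × ℝ))
      have e : zetaX α (t - 1, 0, 1) = (1, 0) := by
        simp [zetaX]
      rw [e]
      exact h
  · simp
  · simp [exSixM]
end
end
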